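/- There exists a constant ε₀ > 0 with the following property. Let R̄ : Fin 4 → Fin 4 → Fin 4 → Fin 4 → ℝ satisfy the curvature symmetries R̄_{ijkl} = −R̄_{jikl} = −R̄_{ijlk} = R̄_{klij} and the first Bianchi identity R̄_{ijkl} + R̄_{jkil} + R̄_{kijl} = 0, and suppose 0 ≤ R̄_{ijij} ≤ 1 for all i ≠ j. Let λ₁, λ₂, λ₃, λ₄ be real numbers and set H = (λ₁ + λ₂ + λ₃ + λ₄)/4. Define R_{ijkl} = R̄_{ijkl} + λ_i·λ_j·(δ_{ik}δ_{jl} − δ_{il}δ_{jk}), Ric_{ij} = ∑_k R_{ikjk}, S = ∑_i Ric_{ii}, |Ric|² = ∑_{i,j} Ric_{ij}², and W_{ijkl} = R_{ijkl} − (1/2)(Ric_{ik}δ_{jl} − Ric_{il}δ_{jk} + Ric_{jl}δ_{ik} − Ric_{jk}δ_{il}) + (S/6)(δ_{ik}δ_{jl} − δ_{il}δ_{jk}). If W_{ijkl} = 0 for all i, j, k, l and |H| ≤ ε₀, then S²/12 − |Ric|²/4 ≤ 3·(1 + H²)². -/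

import Mathlib

/-- Kronecker delta on `Fin 4`. -/
def kdelta (i j : Fin 4) : ℝ := if i = j then 1 else 0

/-- The curvature of the hypersurface obtained from the ambient curvature `Rbar`
and the principal curvatures `lam` via the Gauss equation. -/
def gaussCurv (Rbar : Fin 4 → Fin 4 → Fin 4 → Fin 4 → ℝ) (lam : Fin 4 → ℝ)
    (i j k l : Fin 4) : ℝ :=
  Rbar i j k l + lam i * lam j * (kdelta i k * kdelta j l - kdelta i l * kdelta j k)

/-- Ricci contraction of a curvature array. -/
def ricci (R : Fin 4 → Fin 4 → Fin 4 → Fin 4 → ℝ) (i j : Fin 4) : ℝ :=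
  ∑ k, R i k j k

/-- Scalar curvature of a curvature array. -/
def scal (R : Fin 4 → Fin 4 → Fin 4 → Fin 4 → ℝ) : ℝ :=
  ∑ i, ricci R i i

/-- Squared norm of the Ricci tensor. -/
def ricciNormSq (R : Fin 4 → Fin 4 → Fin 4 → Fin 4 → ℝ) : ℝ :=
  ∑ i, ∑ j, (ricci R i j)^2

/-- Weyl tensor of a curvature array on a 4-dimensional space
(orthonormal frame, metric = Kronecker delta). -/
noncomputable def weyl (R : Fin 4 → Fin 4 → Fin 4 → Fin 4 → ℝ) (i j k l : Fin 4) : ℝ :=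
  R i j k l
    - (1/2) * (ricci R i k * kdelta j l - ricci R i l * kdelta j k
        + ricci R j l * kdelta i k - ricci R j k * kdelta i l)
    + (scal R / 6) * (kdelta i k * kdelta j l - kdelta i l * kdelta j k)

/-!
For every pairing `{i, j}, {k, l}` of the four frame directions, `W = 0` gives
`K i j + K k l = S / 6`, where `K` is the sectional curvature of the hypersurface. Let the ambient
sectional curvatures lie in `[0, κ]`.

If `0 ≤ S`, Cauchy–Schwarz for the Ricci tensor gives `Q ≤ S² / 48`, and the Gauss equation with
`∑_{i<j} λ i * λ j ≤ 6 H²` gives `S ≤ 12 (κ + H²)`.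

If `S < 0`, then `Q ≤ K 0 1 * K 2 3 + K 0 2 * K 1 3 + K 0 3 * K 1 2`, and each product is
nonpositive: otherwise some `K i j` and `K k l` are both negative, hence so are `λ i * λ j ≤ K i j`
and `λ k * λ l ≤ K k l`, so two of the `λ`s are positive and two are negative; pairing like signs
together produces a pairing with `0 < K + K = S / 6`.
-/

/-- The Gauss–Bonnet–Chern integrand `Q` of a curvature array on a 4-dimensional space, in the form
it takes when the Weyl tensor vanishes. -/
noncomputable def gaussBonnetChern (R : Fin 4 → Fin 4 → Fin 4 → Fin 4 → ℝ) : ℝ :=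
  (scal R)^2 / 12 - ricciNormSq R / 4

section Pairings

variable {K : Type*} [CommRing K] [LinearOrder K] [IsStrictOrderedRing K] {x y z w p q : K}

theorem like_signs_of_mul_neg_of_mul_neg (hxy : x * y < 0) (hzw : z * w < 0) :
    (0 < x * z ∧ 0 < y * w) ∨ (0 < x * w ∧ 0 < y * z) := by
  rcases mul_neg_iff.mp hxy with ⟨hx, hy⟩ | ⟨hx, hy⟩ <;>
    rcases mul_neg_iff.mp hzw with ⟨hz, hw⟩ | ⟨hz, hw⟩
  · exact .inl ⟨mul_pos hx hz, mul_pos_of_neg_of_neg hy hw⟩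
  · exact .inr ⟨mul_pos hx hw, mul_pos_of_neg_of_neg hy hz⟩
  · exact .inr ⟨mul_pos_of_neg_of_neg hx hw, mul_pos hy hz⟩
  · exact .inl ⟨mul_pos_of_neg_of_neg hx hz, mul_pos hy hw⟩

theorem mul_nonpos_of_pairing_sums_neg (hp : x * y ≤ p) (hq : z * w ≤ q) (hpq : p + q < 0)
    (hxz : x * z + y * w < 0) (hxw : x * w + y * z < 0) : p * q ≤ 0 := by
  by_contra! hpos
  obtain ⟨hp0, hq0⟩ : p < 0 ∧ q < 0 :=
    (pos_and_pos_or_neg_and_neg_of_mul_pos hpos).resolve_left fun h ↦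
      (add_pos h.1 h.2).not_gt hpq
  rcases like_signs_of_mul_neg_of_mul_neg (hp.trans_lt hp0) (hq.trans_lt hq0) with h | h
  · exact (add_pos h.1 h.2).not_gt hxz
  · exact (add_pos h.1 h.2).not_gt hxw

variable (x y z w) in
theorem eight_mul_sum_pairings_le_three_mul_sq_sum :
    8 * ((x * y + z * w) + (x * z + y * w) + (x * w + y * z)) ≤ 3 * (x + y + z + w) ^ 2 := by
  linarith [sq_nonneg (x - y), sq_nonneg (x - z), sq_nonneg (x - w), sq_nonneg (y - z),
    sq_nonneg (y - w), sq_nonneg (z - w)]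

end Pairings

section Curvature

variable (R : Fin 4 → Fin 4 → Fin 4 → Fin 4 → ℝ)

theorem sum_sq_ricci_diag_le_ricciNormSq : ∑ i, ricci R i i ^ 2 ≤ ricciNormSq R :=
  Finset.sum_le_sum fun i _ ↦
    Finset.single_le_sum (f := fun j ↦ ricci R i j ^ 2) (fun _ _ ↦ sq_nonneg _) (Finset.mem_univ i)

theorem sq_scal_le_four_mul_ricciNormSq : scal R ^ 2 ≤ 4 * ricciNormSq R := by
  calc scal R ^ 2 ≤ 4 * ∑ i, ricci R i i ^ 2 := by
        simpa [scal] using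
          sq_sum_le_card_mul_sum_sq (s := Finset.univ) (f := fun i ↦ ricci R i i)
    _ ≤ 4 * ricciNormSq R := by gcongr; exact sum_sq_ricci_diag_le_ricciNormSq R

theorem gaussBonnetChern_le_sq_scal_div : gaussBonnetChern R ≤ scal R ^ 2 / 48 := by
  unfold gaussBonnetChern
  linarith [sq_scal_le_four_mul_ricciNormSq R]

theorem scal_eq_sum_of_nodup {i j k l : Fin 4} (h : [i, j, k, l].Nodup) :
    scal R = ricci R i i + ricci R j j + ricci R k k + ricci R l l := by
  have huniv : (Finset.univ : Finset (Fin 4)) = [i, j, k, l].toFinset := by decide +revert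
  rw [scal, huniv, List.sum_toFinset _ h]
  simp [add_assoc]

theorem weyl_sectional {i j : Fin 4} (hij : i ≠ j) :
    weyl R i j i j = R i j i j - (ricci R i i + ricci R j j) / 2 + scal R / 6 := by
  simp only [weyl, kdelta, hij, hij.symm, if_true, if_false]
  ring

end Curvature

section VanishingWeyl

variable {R : Fin 4 → Fin 4 → Fin 4 → Fin 4 → ℝ}

theorem sectional_eq_of_weyl_eq_zero {i j : Fin 4} (hij : i ≠ j) (hW : weyl R i j i j = 0) :
    R i j i j = (ricci R i i + ricci R j j) / 2 - scal R / 6 := by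
  linarith [weyl_sectional R hij]

theorem sectional_add_sectional_of_weyl_eq_zero (hW : ∀ i j, i ≠ j → weyl R i j i j = 0)
    {i j k l : Fin 4} (h : [i, j, k, l].Nodup) : R i j i j + R k l k l = scal R / 6 := by
  have hij : i ≠ j := by grind
  have hkl : k ≠ l := by grind
  rw [sectional_eq_of_weyl_eq_zero hij (hW i j hij), sectional_eq_of_weyl_eq_zero hkl (hW k l hkl)]
  linarith [scal_eq_sum_of_nodup R h]

theorem gaussBonnetChern_le_sum_mul_sectional (hW : ∀ i j, i ≠ j → weyl R i j i j = 0) :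
    gaussBonnetChern R ≤
      R 0 1 0 1 * R 2 3 2 3 + R 0 2 0 2 * R 1 3 1 3 + R 0 3 0 3 * R 1 2 1 2 := by
  calc gaussBonnetChern R ≤ scal R ^ 2 / 12 - (∑ i, ricci R i i ^ 2) / 4 := by
        unfold gaussBonnetChern
        gcongr
        exact sum_sq_ricci_diag_le_ricciNormSq R
    _ = R 0 1 0 1 * R 2 3 2 3 + R 0 2 0 2 * R 1 3 1 3 + R 0 3 0 3 * R 1 2 1 2 := by
        iterate 6 rw [sectional_eq_of_weyl_eq_zero (by decide) (hW _ _ (by decide))]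
        simp only [scal, Fin.sum_univ_four]
        ring

end VanishingWeyl

section GaussEquation

variable {Rbar : Fin 4 → Fin 4 → Fin 4 → Fin 4 → ℝ} {lam : Fin 4 → ℝ}

variable (Rbar lam) in
theorem gaussCurv_sectional {i j : Fin 4} (hij : i ≠ j) :
    gaussCurv Rbar lam i j i j = Rbar i j i j + lam i * lam j := by
  simp [gaussCurv, kdelta, hij]

theorem scal_gaussCurv_le {κ H : ℝ} (hκ : ∀ i j, i ≠ j → Rbar i j i j ≤ κ)
    (hH : H = (lam 0 + lam 1 + lam 2 + lam 3) / 4)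
    (hW : ∀ i j, i ≠ j → weyl (gaussCurv Rbar lam) i j i j = 0) :
    scal (gaussCurv Rbar lam) ≤ 12 * (κ + H ^ 2) := by
  have pairing_le : ∀ i j k l : Fin 4, [i, j, k, l].Nodup →
      scal (gaussCurv Rbar lam) / 6 ≤ 2 * κ + (lam i * lam j + lam k * lam l) := by
    intro i j k l h
    have hij : i ≠ j := by grind
    have hkl : k ≠ l := by grind
    rw [← sectional_add_sectional_of_weyl_eq_zero hW h, gaussCurv_sectional _ _ hij,
      gaussCurv_sectional _ _ hkl]
    linarith [hκ i j hij, hκ k l hkl]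
  have hlam := eight_mul_sum_pairings_le_three_mul_sq_sum (lam 0) (lam 1) (lam 2) (lam 3)
  have hsum : lam 0 + lam 1 + lam 2 + lam 3 = 4 * H := by linarith
  rw [hsum] at hlam
  linarith [pairing_le 0 1 2 3 (by decide), pairing_le 0 2 1 3 (by decide),
    pairing_le 0 3 1 2 (by decide)]

theorem pairing_sum_neg_of_scal_neg (hR : ∀ i j, i ≠ j → 0 ≤ Rbar i j i j)
    (hW : ∀ i j, i ≠ j → weyl (gaussCurv Rbar lam) i j i j = 0)
    (hS : scal (gaussCurv Rbar lam) < 0) {i j k l : Fin 4} (h : [i, j, k, l].Nodup) :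
    lam i * lam j + lam k * lam l < 0 := by
  have hij : i ≠ j := by grind
  have hkl : k ≠ l := by grind
  linarith [sectional_add_sectional_of_weyl_eq_zero hW h, gaussCurv_sectional Rbar lam hij,
    gaussCurv_sectional Rbar lam hkl, hR i j hij, hR k l hkl]

theorem mul_sectional_nonpos_of_scal_neg (hR : ∀ i j, i ≠ j → 0 ≤ Rbar i j i j)
    (hW : ∀ i j, i ≠ j → weyl (gaussCurv Rbar lam) i j i j = 0)
    (hS : scal (gaussCurv Rbar lam) < 0) {i j k l : Fin 4} (h : [i, j, k, l].Nodup) :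
    gaussCurv Rbar lam i j i j * gaussCurv Rbar lam k l k l ≤ 0 := by
  have lam_mul_le : ∀ {a b : Fin 4}, a ≠ b → lam a * lam b ≤ gaussCurv Rbar lam a b a b :=
    fun hab ↦ by linarith [gaussCurv_sectional Rbar lam hab, hR _ _ hab]
  refine mul_nonpos_of_pairing_sums_neg (lam_mul_le (by grind)) (lam_mul_le (by grind)) ?_
    (pairing_sum_neg_of_scal_neg hR hW hS (by grind))
    (pairing_sum_neg_of_scal_neg hR hW hS (by grind))
  linarith [sectional_add_sectional_of_weyl_eq_zero hW h]

theorem gaussBonnetChern_nonpos_of_scal_neg (hR : ∀ i j, i ≠ j → 0 ≤ Rbar i j i j)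
    (hW : ∀ i j, i ≠ j → weyl (gaussCurv Rbar lam) i j i j = 0)
    (hS : scal (gaussCurv Rbar lam) < 0) : gaussBonnetChern (gaussCurv Rbar lam) ≤ 0 := by
  have mul_nonpos {i j k l : Fin 4} (h : [i, j, k, l].Nodup) :=
    mul_sectional_nonpos_of_scal_neg hR hW hS h
  refine (gaussBonnetChern_le_sum_mul_sectional hW).trans ?_
  exact add_nonpos (add_nonpos (mul_nonpos (by decide)) (mul_nonpos (by decide)))
    (mul_nonpos (by decide))

theorem stmt_16_general {κ H : ℝ} (hR : ∀ i j, i ≠ j → 0 ≤ Rbar i j i j ∧ Rbar i j i j ≤ κ)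
    (hH : H = (lam 0 + lam 1 + lam 2 + lam 3) / 4)
    (hW : ∀ i j, i ≠ j → weyl (gaussCurv Rbar lam) i j i j = 0) :
    (scal (gaussCurv Rbar lam))^2 / 12 - ricciNormSq (gaussCurv Rbar lam) / 4
      ≤ 3 * (κ + H^2)^2 := by
  change gaussBonnetChern (gaussCurv Rbar lam) ≤ 3 * (κ + H ^ 2) ^ 2
  rcases lt_or_ge (scal (gaussCurv Rbar lam)) 0 with hS | hS
  · calc gaussBonnetChern (gaussCurv Rbar lam) ≤ 0 :=
          gaussBonnetChern_nonpos_of_scal_neg (fun i j hij ↦ (hR i j hij).1) hW hS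
      _ ≤ 3 * (κ + H ^ 2) ^ 2 := by positivity
  · have hS_le := scal_gaussCurv_le (fun i j hij ↦ (hR i j hij).2) hH hW
    calc gaussBonnetChern (gaussCurv Rbar lam) ≤ scal (gaussCurv Rbar lam) ^ 2 / 48 :=
          gaussBonnetChern_le_sq_scal_div _
      _ ≤ (12 * (κ + H ^ 2)) ^ 2 / 48 := by gcongr
      _ = 3 * (κ + H ^ 2) ^ 2 := by ring

end GaussEquation

theorem stmt_16 :
    ∃ ε₀ : ℝ, 0 < ε₀ ∧
      ∀ (Rbar : Fin 4 → Fin 4 → Fin 4 → Fin 4 → ℝ) (lam : Fin 4 → ℝ) (H : ℝ),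
        (∀ i j k l, Rbar i j k l = -Rbar j i k l) →
        (∀ i j k l, Rbar i j k l = -Rbar i j l k) →
        (∀ i j k l, Rbar i j k l = Rbar k l i j) →
        (∀ i j k l, Rbar i j k l + Rbar j k i l + Rbar k i j l = 0) →
        (∀ i j, i ≠ j → 0 ≤ Rbar i j i j ∧ Rbar i j i j ≤ 1) →
        H = (lam 0 + lam 1 + lam 2 + lam 3) / 4 →
        (∀ i j k l, weyl (gaussCurv Rbar lam) i j k l = 0) →
        |H| ≤ ε₀ →
        (scal (gaussCurv Rbar lam))^2 / 12 - ricciNormSq (gaussCurv Rbar lam) / 4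
          ≤ 3 * (1 + H^2)^2 := by
  exact ⟨1, one_pos, fun _ _ _ _ _ _ _ hR hH hW _ ↦ stmt_16_general hR hH fun i j _ ↦ hW i j i j⟩
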